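/- Let γ : I → ℝ² be a four times continuously differentiable unit-speed curve on an open interval I satisfying ⟨γ(s), γ''(s)⟩ = -1 for all s ∈ I, and let κ(s) = det(γ'(s), γ''(s)) denote its signed curvature, which is nowhere zero on I. Then the function s ↦ κ'(s)/κ(s)³ has identically vanishing derivative on I; in particular κ'/κ³ is constant on I. -/

import Mathlib

/-!
Write `γ = (x, y)` and `q = ⟪γ, γ'⟫ = x x' + y y'`. The point is the identity `κ' / κ³ = -q` on `I`,
together with `q' = ‖γ'‖² + ⟪γ, γ''⟫ = 1 - 1 = 0`.

For the identity, unit speed gives the Frenet equations `x'' = -κ y'`, `y'' = κ x'`, so that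
`⟪γ, γ''⟫ = -1` reads `κ (y x' - x y') = -1`. Differentiating this and applying the Frenet equations
once more gives `κ' (y x' - x y') = κ² q`; multiplying by `κ` yields `κ' = -κ³ q`.
-/


open scoped RealInnerProductSpace

lemma hasDerivAt_coord {f : ℝ → EuclideanSpace ℝ (Fin 2)} {v : EuclideanSpace ℝ (Fin 2)} {s : ℝ}
    (h : HasDerivAt f v s) (i : Fin 2) : HasDerivAt (fun u => f u i) (v i) s :=
  (EuclideanSpace.proj (𝕜 := ℝ) i).hasFDerivAt.comp_hasDerivAt s h

/-- For a C⁴ unit-speed planar curve `γ` on an open interval `I` with `⟨γ, γ''⟩ ≡ -1`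
and nowhere-vanishing signed curvature `κ = det(γ', γ'')`, the function `κ'/κ³` has
identically vanishing derivative on `I`; in particular it is constant on `I`. -/
theorem stmt5 (I : Set ℝ) (hI : IsOpen I) (hI' : I.OrdConnected)
    (γ : ℝ → EuclideanSpace ℝ (Fin 2)) (hγ : ContDiffOn ℝ 4 γ I)
    (hunit : ∀ s ∈ I, ‖deriv γ s‖ = 1)
    (hinc : ∀ s ∈ I, ⟪γ s, deriv (deriv γ) s⟫ = -1)
    (κ : ℝ → ℝ)
    (hκ : ∀ s : ℝ, κ s =
      Matrix.det !![deriv γ s 0, deriv (deriv γ) s 0;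
                    deriv γ s 1, deriv (deriv γ) s 1])
    (hκ0 : ∀ s ∈ I, κ s ≠ 0) :
    (∀ s ∈ I, deriv (fun u => deriv κ u / κ u ^ 3) s = 0) ∧
    (∃ C : ℝ, ∀ s ∈ I, deriv κ s / κ s ^ 3 = C) := by
  have hγ1 : ContDiffOn ℝ 3 (deriv γ) I := hγ.deriv_of_isOpen hI (by norm_num)
  have hγ2 : ContDiffOn ℝ 2 (deriv (deriv γ)) I := hγ1.deriv_of_isOpen hI (by norm_num)
  have D0 : ∀ s ∈ I, HasDerivAt γ (deriv γ s) s := fun s hs =>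
    ((hγ.differentiableOn (by norm_num)).differentiableAt (hI.mem_nhds hs)).hasDerivAt
  have D1 : ∀ s ∈ I, HasDerivAt (deriv γ) (deriv (deriv γ) s) s := fun s hs =>
    ((hγ1.differentiableOn (by norm_num)).differentiableAt (hI.mem_nhds hs)).hasDerivAt
  have D2 : ∀ s ∈ I, HasDerivAt (deriv (deriv γ)) (deriv (deriv (deriv γ)) s) s := fun s hs =>
    ((hγ2.differentiableOn (by norm_num)).differentiableAt (hI.mem_nhds hs)).hasDerivAt
  have hκ' : ∀ s, κ s = deriv γ s 0 * deriv (deriv γ) s 1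
      - deriv (deriv γ) s 0 * deriv γ s 1 := fun s => by
    rw [hκ, Matrix.det_fin_two_of]
  have hunit' : ∀ s ∈ I, deriv γ s 0 ^ 2 + deriv γ s 1 ^ 2 = 1 := fun s hs => by
    have h := EuclideanSpace.real_norm_sq_eq (deriv γ s)
    rw [hunit s hs, Fin.sum_univ_two] at h
    linarith
  have hinc' : ∀ s ∈ I, γ s 0 * deriv (deriv γ) s 0 + γ s 1 * deriv (deriv γ) s 1 = -1 :=
    fun s hs => by
      have h := hinc s hs
      rw [PiLp.inner_apply, Fin.sum_univ_two] at h
      simp only [RCLike.inner_apply, conj_trivial] at h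
      linarith
  have hDκ : ∀ s ∈ I, DifferentiableAt ℝ κ s := fun s hs => by
    rw [funext hκ']
    exact (((hasDerivAt_coord (D1 s hs) 0).mul (hasDerivAt_coord (D2 s hs) 1)).sub
      ((hasDerivAt_coord (D2 s hs) 0).mul (hasDerivAt_coord (D1 s hs) 1))).differentiableAt
  have horth : ∀ s ∈ I,
      deriv γ s 0 * deriv (deriv γ) s 0 + deriv γ s 1 * deriv (deriv γ) s 1 = 0 := fun s hs => by
    have h := ((hasDerivAt_coord (D1 s hs) 0).pow 2).add ((hasDerivAt_coord (D1 s hs) 1).pow 2)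
    have h0 := (hasDerivAt_const s (1 : ℝ)).congr_of_eventuallyEq
      (Filter.eventually_of_mem (hI.mem_nhds hs) hunit')
    have h1 := h.unique h0
    norm_num at h1
    linarith
  have frenet0 : ∀ s ∈ I, deriv (deriv γ) s 0 = -κ s * deriv γ s 1 := fun s hs => by
    rw [hκ']
    linear_combination deriv γ s 0 * horth s hs - deriv (deriv γ) s 0 * hunit' s hs
  have frenet1 : ∀ s ∈ I, deriv (deriv γ) s 1 = κ s * deriv γ s 0 := fun s hs => by
    rw [hκ']
    linear_combination deriv γ s 1 * horth s hs - deriv (deriv γ) s 1 * hunit' s hs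
  have hsupp : ∀ s ∈ I, κ s * (γ s 1 * deriv γ s 0 - γ s 0 * deriv γ s 1) = -1 := fun s hs => by
    have h := hinc' s hs
    rw [frenet0 s hs, frenet1 s hs] at h
    linarith
  have key : ∀ s ∈ I, deriv κ s / κ s ^ 3 = -(γ s 0 * deriv γ s 0 + γ s 1 * deriv γ s 1) :=
    fun s hs => by
      have h := (hDκ s hs).hasDerivAt.mul
        (((hasDerivAt_coord (D0 s hs) 1).mul (hasDerivAt_coord (D1 s hs) 0)).sub
          ((hasDerivAt_coord (D0 s hs) 0).mul (hasDerivAt_coord (D1 s hs) 1)))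
      have h0 := (hasDerivAt_const s (-1 : ℝ)).congr_of_eventuallyEq
        (Filter.eventually_of_mem (hI.mem_nhds hs) hsupp)
      have h1 := h.unique h0
      simp only [Pi.sub_apply, Pi.mul_apply] at h1
      rw [frenet0 s hs, frenet1 s hs] at h1
      rw [div_eq_iff (pow_ne_zero 3 (hκ0 s hs))]
      linear_combination deriv κ s * hsupp s hs - κ s * h1
  have hderiv : ∀ s ∈ I, HasDerivAt (fun u => deriv κ u / κ u ^ 3) 0 s := fun s hs => by
    have h := (((hasDerivAt_coord (D0 s hs) 0).mul (hasDerivAt_coord (D1 s hs) 0)).add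
      ((hasDerivAt_coord (D0 s hs) 1).mul (hasDerivAt_coord (D1 s hs) 1))).neg
    refine (h.congr_of_eventuallyEq
      (Filter.eventually_of_mem (hI.mem_nhds hs) key)).congr_deriv ?_
    linear_combination -hunit' s hs - hinc' s hs
  refine ⟨fun s hs => (hderiv s hs).deriv, ?_⟩
  exact hI.exists_is_const_of_deriv_eq_zero hI'.isPreconnected
    (fun s hs => (hderiv s hs).differentiableAt.differentiableWithinAt)
    (fun s hs => (hderiv s hs).deriv)
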